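/- Let f : ℝ² → ℝ be of class C² satisfying (i) D²f(p)(q,q) > 0 for all p, q ∈ ℝ² with q ≠ 0, and (ii) there is a constant λ > 0 with D²f(p)(q,q) ≤ λ · (ln(2+|p|)/(1+|p|)) · |q|² for all p, q ∈ ℝ². Let u ∈ C²(ℝ²) be an entire solution of div[Df(∇u)] = 0 on ℝ². Suppose there exist two linearly independent vectors E₁, E₂ ∈ ℝ² and constants 0 ≤ m < 1, K > 0 such that |∂_{E₁}u(x)| ≤ K(|∂_{E₂}u(x)|^m + 1) for all x ∈ ℝ², where ∂_{E_α}u denotes the directional derivative of u in direction E_α. Then u is an affine function. -/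

import Mathlib

open Real MeasureTheory Metric
open scoped ENNReal

noncomputable section

/-- `ℝ²` with its Euclidean structure. -/
abbrev E2 : Type := EuclideanSpace ℝ (Fin 2)

/-- The `i`-th standard basis vector of `ℝ²`. -/
def ee (i : Fin 2) : E2 := EuclideanSpace.single i 1

/-- The Hessian bilinear form `D²f(p)(q,q)`. -/
def Hess (f : E2 → ℝ) (p q : E2) : ℝ := iteratedFDeriv ℝ 2 f p ![q, q]

/-- The partial derivative `∂ᵢu(x)`. -/
def pd (u : E2 → ℝ) (i : Fin 2) (x : E2) : ℝ := fderiv ℝ u x (ee i)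

/-- The equation `div [Df(∇u)] = 0`, i.e. `∑ i, ∂ᵢ[(∂f/∂pᵢ)(∇u(x))] = 0` on `ℝ²`. -/
def solves (f u : E2 → ℝ) : Prop :=
  ∀ x : E2, ∑ i : Fin 2, fderiv ℝ (fun y => fderiv ℝ f (gradient u y) (ee i)) x (ee i) = 0

/-- A divergence-free `C¹` field is orthogonal to gradients of compactly supported functions. -/
lemma integral_sum_mul_fderiv_eq_zero {σ : Fin 2 → E2 → ℝ} (hσ : ∀ i, ContDiff ℝ 1 (σ i))
    (hdiv : ∀ x, ∑ i, fderiv ℝ (σ i) x (ee i) = 0) {φ : E2 → ℝ} (hφ : ContDiff ℝ 1 φ)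
    (hc : HasCompactSupport φ) :
    ∫ x, ∑ i, σ i x * fderiv ℝ φ x (ee i) = 0 := by
  have hdφ (v : E2) : Continuous fun x => fderiv ℝ φ x v :=
    (hφ.continuous_fderiv one_ne_zero).clm_apply continuous_const
  have hdσ (i : Fin 2) (v : E2) : Continuous fun x => fderiv ℝ (σ i) x v :=
    ((hσ i).continuous_fderiv one_ne_zero).clm_apply continuous_const
  have hint (i : Fin 2) : Integrable fun x => σ i x * fderiv ℝ φ x (ee i) :=
    ((hσ i).continuous.mul (hdφ _)).integrable_of_hasCompactSupport (hc.fderiv_apply ℝ _).mul_left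
  have hint' (i : Fin 2) : Integrable fun x => fderiv ℝ (σ i) x (ee i) * φ x :=
    ((hdσ i _).mul hφ.continuous).integrable_of_hasCompactSupport hc.mul_left
  have hparts (i : Fin 2) : ∫ x, σ i x * fderiv ℝ φ x (ee i)
      = - ∫ x, fderiv ℝ (σ i) x (ee i) * φ x :=
    integral_mul_fderiv_eq_neg_fderiv_mul_of_integrable (hint' i) (hint i)
      (((hσ i).continuous.mul hφ.continuous).integrable_of_hasCompactSupport hc.mul_left)
      (fun x _ => (hσ i).differentiable one_ne_zero x)
      (fun x _ => hφ.differentiable one_ne_zero x)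
  rw [integral_finsetSum _ fun i _ => hint i]
  simp_rw [hparts]
  rw [Finset.sum_neg_distrib, ← integral_finsetSum _ fun i _ => hint' i]
  simp_rw [← Finset.sum_mul, hdiv]
  simp

/-- Differentiation of `t ↦ ∫ s(x + tv) ψ(x) dx` at `t = 0`. -/
lemma hasDerivAt_integral_translate_mul {s ψ : E2 → ℝ} (hs : ContDiff ℝ 1 s) (hψ : Continuous ψ)
    (hc : HasCompactSupport ψ) (v : E2) :
    HasDerivAt (fun t : ℝ => ∫ x, s (x + t • v) * ψ x) (∫ x, fderiv ℝ s x v * ψ x) 0 := by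
  have hds : Continuous fun x => fderiv ℝ s x v :=
    (hs.continuous_fderiv one_ne_zero).clm_apply continuous_const
  have hK : IsCompact
      (Set.image (fun z : E2 × ℝ => z.1 + z.2 • v) (tsupport ψ ×ˢ Set.Icc (-1) 1)) :=
    (IsCompact.prod hc isCompact_Icc).image (by fun_prop)
  obtain ⟨C, hC⟩ := hK.exists_bound_of_continuousOn hds.continuousOn
  have key := hasDerivAt_integral_of_dominated_loc_of_deriv_le (μ := (volume : Measure E2))
    (F := fun (t : ℝ) x => s (x + t • v) * ψ x)
    (F' := fun (t : ℝ) x => fderiv ℝ s (x + t • v) v * ψ x) (x₀ := (0 : ℝ))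
    (s := Set.Icc (-1) 1) (bound := fun x => C * ‖ψ x‖)
    (Icc_mem_nhds (by norm_num) (by norm_num))
    (Filter.Eventually.of_forall fun t =>
      ((hs.continuous.comp (by fun_prop)).mul hψ).aestronglyMeasurable)
    (((hs.continuous.comp (by fun_prop)).mul hψ).integrable_of_hasCompactSupport hc.mul_left)
    (((hds.comp (by fun_prop : Continuous fun x : E2 => x + (0 : ℝ) • v)).mul
      hψ).aestronglyMeasurable)
    (Filter.Eventually.of_forall fun x t ht => by
      rw [norm_mul]
      by_cases hx : x ∈ tsupport ψ
      · exact mul_le_mul_of_nonneg_right (hC _ ⟨(x, t), ⟨hx, ht⟩, rfl⟩) (norm_nonneg _)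
      · simp [image_eq_zero_of_notMem_tsupport hx])
    ((hψ.integrable_of_hasCompactSupport hc).norm.const_mul C)
    (Filter.Eventually.of_forall fun x t _ => by
      have h1 : HasDerivAt (fun t : ℝ => x + t • v) v t := by
        simpa using ((hasDerivAt_id t).smul_const v).const_add x
      exact ((hs.differentiable one_ne_zero _).hasFDerivAt.comp_hasDerivAt t h1).mul_const _)
  simpa using key.2

/-- The derivative of a divergence-free `C¹` field in a fixed direction is weakly
divergence-free. -/
lemma integral_sum_fderiv_mul_fderiv_eq_zero {σ : Fin 2 → E2 → ℝ}
    (hσ : ∀ i, ContDiff ℝ 1 (σ i)) (hdiv : ∀ x, ∑ i, fderiv ℝ (σ i) x (ee i) = 0)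
    {φ : E2 → ℝ} (hφ : ContDiff ℝ 1 φ) (hc : HasCompactSupport φ) (v : E2) :
    ∫ x, ∑ i, fderiv ℝ (σ i) x v * fderiv ℝ φ x (ee i) = 0 := by
  have hdφ (i : Fin 2) : Continuous fun x => fderiv ℝ φ x (ee i) :=
    (hφ.continuous_fderiv one_ne_zero).clm_apply continuous_const
  have hcφ (i : Fin 2) : HasCompactSupport fun x => fderiv ℝ φ x (ee i) := hc.fderiv_apply ℝ _
  have hzero (t : ℝ) : ∑ i, ∫ x, σ i (x + t • v) * fderiv ℝ φ x (ee i) = 0 := by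
    have hσt (i : Fin 2) : ContDiff ℝ 1 fun x => σ i (x + t • v) := (hσ i).comp (by fun_prop)
    have hint (i : Fin 2) : Integrable fun x => σ i (x + t • v) * fderiv ℝ φ x (ee i) :=
      ((hσt i).continuous.mul (hdφ i)).integrable_of_hasCompactSupport (hcφ i).mul_left
    rw [← integral_finsetSum _ fun i _ => hint i]
    refine integral_sum_mul_fderiv_eq_zero hσt (fun x => ?_) hφ hc
    simp_rw [fderiv_comp_add_right]
    exact hdiv _
  have hderiv := HasDerivAt.fun_sum (u := Finset.univ) fun i _ =>
    hasDerivAt_integral_translate_mul (hσ i) (hdφ i) (hcφ i) v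
  simp_rw [hzero] at hderiv
  have hint (i : Fin 2) : Integrable fun x => fderiv ℝ (σ i) x v * fderiv ℝ φ x (ee i) :=
    ((((hσ i).continuous_fderiv one_ne_zero).clm_apply continuous_const).mul
      (hdφ i)).integrable_of_hasCompactSupport (hcφ i).mul_left
  rw [integral_finsetSum _ fun i _ => hint i]
  exact hderiv.unique (hasDerivAt_const _ _)

/-- The integral over the plane of the radial profile `1 / (1 + r²)` truncated at radius `ρ`. -/
lemma integral_indicator_inv_one_add_norm_sq {ρ : ℝ} (hρ : 0 < ρ) :
    Integrable (fun x : E2 => (Set.Iic ρ).indicator (fun r : ℝ => (1 + r ^ 2)⁻¹) ‖x‖) ∧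
    ∫ x : E2, (Set.Iic ρ).indicator (fun r : ℝ => (1 + r ^ 2)⁻¹) ‖x‖
      = volume.real (ball (0 : E2) 1) * Real.log (1 + ρ ^ 2) := by
  have hne (y : ℝ) : 1 + y ^ 2 ≠ 0 := by positivity
  have hfun : (fun y : ℝ => y ^ (Module.finrank ℝ E2 - 1) •
      (Set.Iic ρ).indicator (fun r : ℝ => (1 + r ^ 2)⁻¹) y)
      = (Set.Iic ρ).indicator fun y : ℝ => y * (1 + y ^ 2)⁻¹ := by
    ext y
    by_cases hy : y ∈ Set.Iic ρ <;> simp [hy]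
  have hcont : Continuous fun y : ℝ => y * (1 + y ^ 2)⁻¹ :=
    continuous_id.mul ((by fun_prop : Continuous fun y : ℝ => 1 + y ^ 2).inv₀ hne)
  constructor
  · rw [integrable_fun_norm_addHaar volume, hfun, IntegrableOn,
      integrable_indicator_iff measurableSet_Iic, IntegrableOn,
      Measure.restrict_restrict measurableSet_Iic, Set.inter_comm, Set.Ioi_inter_Iic]
    exact (hcont.integrableOn_Icc).mono_set Set.Ioc_subset_Icc_self
  · rw [integral_fun_norm_addHaar volume, hfun, setIntegral_indicator measurableSet_Iic,
      Set.Ioi_inter_Iic, ← intervalIntegral.integral_of_le hρ.le,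
      intervalIntegral.integral_eq_sub_of_hasDerivAt
        (f := fun y : ℝ => Real.log (1 + y ^ 2) / 2) (fun y _ => ?_)
        (hcont.intervalIntegrable _ _)]
    · simp
      ring
    · convert! (((hasDerivAt_pow 2 y).const_add 1).log (hne y)).div_const 2 using 1
      field_simp
      norm_num
      ring

/-- Logarithmic cutoff functions: in the plane, balls have arbitrarily small capacity. -/
lemma exists_cutoff_integral_norm_gradient_sq_le (R : ℝ) {ε : ℝ} (hε : 0 < ε) :
    ∃ η : E2 → ℝ, ContDiff ℝ 1 η ∧ HasCompactSupport η ∧ (∀ x, ‖x‖ ≤ R → η x = 1) ∧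
      ∫ x, ‖gradient η x‖ ^ 2 ≤ ε := by
  let θ : ContDiffBump (0 : ℝ) := ⟨1, 2, one_pos, one_lt_two⟩
  have hθ : ContDiff ℝ 1 θ := θ.contDiff
  obtain ⟨C, hC⟩ := (hθ.continuous_deriv le_rfl).bounded_above_of_compact_support
    θ.hasCompactSupport.deriv
  set V := volume.real (ball (0 : E2) 1)
  have hV : 0 ≤ V := measureReal_nonneg
  obtain ⟨L, hL1, hLR, hLε⟩ : ∃ L : ℝ, 1 ≤ L ∧ Real.log (1 + R ^ 2) ≤ L ∧
      12 * C ^ 2 * V / ε ≤ L :=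
    ⟨max 1 (max (Real.log (1 + R ^ 2)) (12 * C ^ 2 * V / ε)), le_max_left _ _,
      (le_max_left _ _).trans (le_max_right _ _), (le_max_right _ _).trans (le_max_right _ _)⟩
  have hL : 0 < L := by linarith
  have hne (x : E2) : 1 + ‖x‖ ^ 2 ≠ 0 := by positivity
  have hlog : ContDiff ℝ 1 fun x : E2 => Real.log (1 + ‖x‖ ^ 2) / L :=
    ((contDiff_const.add (contDiff_norm_sq ℝ)).log hne).div_const _
  have hlog0 (x : E2) : 0 ≤ Real.log (1 + ‖x‖ ^ 2) / L :=
    div_nonneg (Real.log_nonneg (by nlinarith [sq_nonneg ‖x‖])) hL.le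
  have hfar {x : E2} (hx : ¬ ‖x‖ ≤ Real.exp L) : 2 < Real.log (1 + ‖x‖ ^ 2) / L := by
    rw [lt_div_iff₀ hL, Real.lt_log_iff_exp_lt (by positivity), two_mul, Real.exp_add]
    nlinarith [Real.exp_pos L]
  have hη : ContDiff ℝ 1 fun x : E2 => θ (Real.log (1 + ‖x‖ ^ 2) / L) := hθ.comp hlog
  refine ⟨fun x => θ (Real.log (1 + ‖x‖ ^ 2) / L), hη, ?_, fun x hx => ?_, ?_⟩
  · refine HasCompactSupport.of_support_subset_isCompact (isCompact_closedBall (0 : E2) (Real.exp L))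
      fun x hx => ?_
    by_contra hx'
    rw [mem_closedBall_zero_iff] at hx'
    refine hx (θ.zero_of_le_dist ?_)
    rw [dist_zero_right, Real.norm_of_nonneg (hlog0 x)]
    exact (hfar hx').le
  · refine θ.one_of_mem_closedBall ?_
    rw [mem_closedBall_zero_iff, Real.norm_of_nonneg (hlog0 x)]
    refine (div_le_one hL).2 (le_trans (Real.log_le_log (by positivity) ?_) hLR)
    gcongr
  · have hgrad (x : E2) : ‖gradient (fun x : E2 => θ (Real.log (1 + ‖x‖ ^ 2) / L)) x‖ ^ 2
        ≤ 4 * C ^ 2 / L ^ 2 *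
          (Set.Iic (Real.exp L)).indicator (fun r : ℝ => (1 + r ^ 2)⁻¹) ‖x‖ := by
      have hd : HasFDerivAt (fun x : E2 => θ (Real.log (1 + ‖x‖ ^ 2) / L))
          (deriv θ (Real.log (1 + ‖x‖ ^ 2) / L) •
            (L⁻¹ • ((1 + ‖x‖ ^ 2)⁻¹ • (2 • innerSL ℝ x)))) x := by
        have h1 : HasFDerivAt (fun x : E2 => Real.log (1 + ‖x‖ ^ 2) / L)
            (L⁻¹ • ((1 + ‖x‖ ^ 2)⁻¹ • (2 • innerSL ℝ x))) x := by
          simp_rw [div_eq_inv_mul]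
          exact ((((hasStrictFDerivAt_norm_sq x).hasFDerivAt).const_add 1).log (hne x)).const_mul _
        exact ((hθ.differentiable one_ne_zero _).hasDerivAt).comp_hasFDerivAt x h1
      have hnorm : ‖gradient (fun x : E2 => θ (Real.log (1 + ‖x‖ ^ 2) / L)) x‖
          = ‖deriv θ (Real.log (1 + ‖x‖ ^ 2) / L)‖ * (L⁻¹ * ((1 + ‖x‖ ^ 2)⁻¹ * (2 * ‖x‖))) := by
        rw [gradient, LinearIsometryEquiv.norm_map, hd.fderiv, ← Nat.cast_smul_eq_nsmul ℝ]
        simp only [norm_smul, innerSL_apply_norm, norm_inv, Real.norm_eq_abs]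
        rw [abs_of_pos hL, abs_of_pos (by positivity : 0 < 1 + ‖x‖ ^ 2)]
        simp
      rw [hnorm]
      by_cases hx : ‖x‖ ≤ Real.exp L
      · rw [Set.indicator_of_mem (Set.mem_Iic.2 hx)]
        have h1 : ‖deriv θ (Real.log (1 + ‖x‖ ^ 2) / L)‖ ^ 2 ≤ C ^ 2 :=
          pow_le_pow_left₀ (norm_nonneg _) (hC _) 2
        calc _ = ‖deriv θ (Real.log (1 + ‖x‖ ^ 2) / L)‖ ^ 2 *
              (4 / L ^ 2 * ((1 + ‖x‖ ^ 2)⁻¹ * (‖x‖ ^ 2 / (1 + ‖x‖ ^ 2)))) := by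
              field_simp
              ring
          _ ≤ C ^ 2 * (4 / L ^ 2 * ((1 + ‖x‖ ^ 2)⁻¹ * 1)) := by
              gcongr
              rw [div_le_one (by positivity)]
              linarith
          _ = _ := by ring
      · have h0 : deriv θ (Real.log (1 + ‖x‖ ^ 2) / L) = 0 := by
          refine deriv_of_notMem_tsupport fun hmem => ?_
          rw [θ.tsupport_eq, mem_closedBall_zero_iff, Real.norm_of_nonneg (hlog0 x)] at hmem
          exact absurd hmem (not_le.2 (hfar hx))
        rw [h0, Set.indicator_of_notMem (by simpa using hx)]
        simp
    obtain ⟨hint, hval⟩ := integral_indicator_inv_one_add_norm_sq (Real.exp_pos L)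
    have hlogexp : Real.log (1 + Real.exp L ^ 2) ≤ 3 * L := by
      rw [Real.log_le_iff_le_exp (by positivity)]
      have h1 : Real.exp (3 * L) = Real.exp L ^ 3 := by rw [← Real.exp_nat_mul]; norm_num
      have h2 : 2 ≤ Real.exp L := by linarith [Real.add_one_le_exp L]
      rw [h1]
      nlinarith [mul_le_mul_of_nonneg_left h2 (sq_nonneg (Real.exp L))]
    calc _ ≤ ∫ x : E2, 4 * C ^ 2 / L ^ 2 *
          (Set.Iic (Real.exp L)).indicator (fun r : ℝ => (1 + r ^ 2)⁻¹) ‖x‖ :=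
          integral_mono_of_nonneg (Filter.Eventually.of_forall fun x => by positivity)
            (hint.const_mul _) (Filter.Eventually.of_forall hgrad)
      _ = 4 * C ^ 2 / L ^ 2 * (V * Real.log (1 + Real.exp L ^ 2)) := by
          rw [integral_const_mul, hval]
      _ ≤ 4 * C ^ 2 / L ^ 2 * (V * (3 * L)) := by gcongr
      _ = 12 * C ^ 2 * V / L := by field_simp; ring
      _ ≤ ε := by rwa [div_le_comm₀ hL hε]

lemma continuous_gradient {φ : E2 → ℝ} (hφ : ContDiff ℝ 1 φ) : Continuous (gradient φ) :=
  (InnerProductSpace.toDual ℝ E2).symm.continuous.comp (hφ.continuous_fderiv one_ne_zero)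

lemma hasCompactSupport_gradient {φ : E2 → ℝ} (hφ : HasCompactSupport φ) :
    HasCompactSupport (gradient φ) :=
  (hφ.fderiv ℝ).comp_left (g := (InnerProductSpace.toDual ℝ E2).symm) (map_zero _)

lemma hasCompactSupport_sq {φ : E2 → ℝ} (hφ : HasCompactSupport φ) :
    HasCompactSupport fun x => φ x ^ 2 :=
  hφ.comp_left (g := fun t : ℝ => t ^ 2) (by simp)

lemma gradient_sq_mul_comp {η w : E2 → ℝ} {g : ℝ → ℝ} {x : E2} (hη : DifferentiableAt ℝ η x)
    (hw : DifferentiableAt ℝ w x) (hg : DifferentiableAt ℝ g (w x)) :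
    gradient (fun y => η y ^ 2 * g (w y)) x
      = (2 * η x * g (w x)) • gradient η x + (η x ^ 2 * deriv g (w x)) • gradient w x := by
  have hd := (hη.hasFDerivAt.pow 2).mul (hg.hasDerivAt.comp_hasFDerivAt x hw.hasFDerivAt)
  have hd' : fderiv ℝ (fun y => η y ^ 2 * g (w y)) x = _ := hd.fderiv
  rw [gradient, hd', gradient, gradient, ← map_smul, ← map_smul, ← map_add]
  congr 1
  ext v
  simp
  ring

/-- **Liouville-type lemma.** Let `w` solve `div (A ∇w) = 0` weakly in the plane for a nonnegative
symmetric coefficient field `A`. If `g(w)² A / g'(w)` is bounded for some increasing `g`, then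
the energy density of `w` vanishes. -/
lemma energy_eq_zero_of_weak_solution {A : E2 → E2 →L[ℝ] E2 →L[ℝ] ℝ} (hA : Continuous A)
    (hsymm : ∀ x p q, A x p q = A x q p) (hnonneg : ∀ x q, 0 ≤ A x q q)
    {w : E2 → ℝ} (hw : ContDiff ℝ 1 w)
    (hweak : ∀ φ : E2 → ℝ, ContDiff ℝ 1 φ → HasCompactSupport φ →
      ∫ x, A x (gradient w x) (gradient φ x) = 0)
    {g : ℝ → ℝ} (hg : ContDiff ℝ 1 g) (hg' : ∀ t, 0 < deriv g t) {M : ℝ} (hM0 : 0 ≤ M)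
    (hM : ∀ x q, g (w x) ^ 2 * A x q q ≤ M * deriv g (w x) * ‖q‖ ^ 2) (x : E2) :
    A x (gradient w x) (gradient w x) = 0 := by
  set P : E2 → ℝ := fun x => deriv g (w x) * A x (gradient w x) (gradient w x) with hP
  have hPcont : Continuous P :=
    ((hg.continuous_deriv le_rfl).comp hw.continuous).mul
      ((hA.clm_apply (continuous_gradient hw)).clm_apply (continuous_gradient hw))
  have hP0 (x : E2) : 0 ≤ P x := mul_nonneg (hg' _).le (hnonneg _ _)
  -- The Caccioppoli inequality.
  have hcacc {η : E2 → ℝ} (hη : ContDiff ℝ 1 η) (hc : HasCompactSupport η) :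
      ∫ x, η x ^ 2 * P x ≤ 4 * M * ∫ x, ‖gradient η x‖ ^ 2 := by
    have hcsq := hasCompactSupport_sq hc
    have hφ : ContDiff ℝ 1 fun x => η x ^ 2 * g (w x) := (hη.pow 2).mul (hg.comp hw)
    have hφc : HasCompactSupport fun x => η x ^ 2 * g (w x) := hcsq.mul_right
    have hint1 : Integrable fun x => η x ^ 2 * P x :=
      ((hη.continuous.pow 2).mul hPcont).integrable_of_hasCompactSupport hcsq.mul_right
    have hint2 : Integrable fun x => ‖gradient η x‖ ^ 2 :=
      ((continuous_gradient hη).norm.pow 2).integrable_of_hasCompactSupport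
        (hasCompactSupport_sq (hasCompactSupport_gradient hc).norm)
    have hpt (x : E2) : η x ^ 2 * P x / 2 - 2 * M * ‖gradient η x‖ ^ 2
        ≤ A x (gradient w x) (gradient (fun y => η y ^ 2 * g (w y)) x) := by
      rw [gradient_sq_mul_comp (hη.differentiable one_ne_zero x) (hw.differentiable one_ne_zero x)
        (hg.differentiable one_ne_zero _)]
      have hsq := hnonneg x ((η x * deriv g (w x)) • gradient w x + (2 * g (w x)) • gradient η x)
      have hMx := hM x (gradient η x)
      simp only [map_add, map_smul, add_apply, smul_apply,
        smul_eq_mul, hP, hsymm x (gradient η x) (gradient w x)] at hsq ⊢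
      refine le_of_mul_le_mul_left ?_ (hg' (w x))
      nlinarith
    have hint3 : Integrable fun x =>
        A x (gradient w x) (gradient (fun y => η y ^ 2 * g (w y)) x) := by
      refine ((hA.clm_apply (continuous_gradient hw)).clm_apply
        (continuous_gradient hφ)).integrable_of_hasCompactSupport ?_
      refine (hasCompactSupport_gradient hφc).mono fun x hx hx0 => hx ?_
      simp [hx0]
    have hle := integral_mono ((hint1.div_const 2).sub (hint2.const_mul (2 * M))) hint3 hpt
    rw [hweak _ hφ hφc] at hle
    simp only [Pi.sub_apply] at hle
    rw [integral_sub (hint1.div_const 2) (hint2.const_mul (2 * M)), integral_div,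
      integral_const_mul] at hle
    linarith
  by_contra hne
  let b : ContDiffBump x := ⟨1, 2, one_pos, one_lt_two⟩
  have hbP : Continuous fun y => b y * P y := b.continuous.mul hPcont
  have hpos : 0 < ∫ y, b y * P y := by
    refine hbP.integral_pos_of_hasCompactSupport_nonneg_nonzero b.hasCompactSupport.mul_right
      (fun y => mul_nonneg b.nonneg (hP0 y)) (x := x) ?_
    rw [b.one_of_mem_closedBall (mem_closedBall_self zero_le_one), one_mul]
    exact mul_ne_zero (hg' _).ne' hne
  obtain ⟨η, hη, hc, hη1, hηε⟩ := exists_cutoff_integral_norm_gradient_sq_le (‖x‖ + 2)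
    (ε := (∫ y, b y * P y) / (8 * (M + 1))) (by positivity)
  have hle : ∫ y, b y * P y ≤ ∫ y, η y ^ 2 * P y := by
    refine integral_mono (hbP.integrable_of_hasCompactSupport b.hasCompactSupport.mul_right)
      (((hη.continuous.pow 2).mul hPcont).integrable_of_hasCompactSupport ?_) fun y => ?_
    · exact (hasCompactSupport_sq hc).mul_right
    · by_cases hy : dist y x < 2
      · have : η y = 1 := by
          refine hη1 y ?_
          rw [dist_eq_norm] at hy
          linarith [norm_le_norm_add_norm_sub' y x]
        simp only [this]
        exact mul_le_mul_of_nonneg_right (by simpa using b.le_one) (hP0 y)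
      · simp only [b.zero_of_le_dist (not_lt.1 hy), zero_mul]
        exact mul_nonneg (sq_nonneg _) (hP0 y)
  have h2 := hcacc hη hc
  have h3 : 4 * M * ((∫ y, b y * P y) / (8 * (M + 1))) ≤ (∫ y, b y * P y) / 2 := by
    rw [mul_div_assoc', div_le_div_iff₀ (by positivity) (by positivity)]
    nlinarith
  have h4 := mul_le_mul_of_nonneg_left hηε (by positivity : 0 ≤ 4 * M)
  linarith

/-- The damped identity `t ↦ t (1 + t²)^(-a)`. -/
def damp (a t : ℝ) : ℝ := t * (1 + t ^ 2) ^ (-a)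

lemma contDiff_damp (a : ℝ) : ContDiff ℝ 1 (damp a) :=
  contDiff_id.mul ((contDiff_const.add (contDiff_id.pow 2)).rpow_const_of_ne
    fun t => by simp only [id]; positivity)

lemma deriv_damp (a t : ℝ) :
    deriv (damp a) t = (1 + (1 - 2 * a) * t ^ 2) * (1 + t ^ 2) ^ (-a - 1) := by
  have hpos : 0 < 1 + t ^ 2 := by positivity
  have h := (hasDerivAt_id t).mul
    (((hasDerivAt_pow 2 t).const_add 1).rpow_const (p := -a) (Or.inl hpos.ne'))
  have h' : deriv (damp a) t = _ := h.deriv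
  have hsplit : (1 + t ^ 2) ^ (-a) = (1 + t ^ 2) * (1 + t ^ 2) ^ (-a - 1) := by
    rw [Real.rpow_sub_one hpos.ne']
    field_simp
  rw [h', hsplit]
  simp
  ring

lemma deriv_damp_pos {a : ℝ} (ha : a < 1 / 2) (t : ℝ) : 0 < deriv (damp a) t := by
  rw [deriv_damp]
  have : 0 ≤ (1 - 2 * a) * t ^ 2 := mul_nonneg (by linarith) (sq_nonneg t)
  positivity

lemma damp_sq_le {a : ℝ} (ha : a < 1 / 2) (t : ℝ) :
    damp a t ^ 2 ≤ (1 - 2 * a)⁻¹ * (1 + t ^ 2) ^ (1 - a) * deriv (damp a) t := by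
  have hpos : 0 < 1 + t ^ 2 := by positivity
  have h2 : 0 < 1 - 2 * a := by linarith
  have hexp : (1 + t ^ 2) ^ (1 - a) * (1 + t ^ 2) ^ (-a - 1) = ((1 + t ^ 2) ^ (-a)) ^ 2 := by
    rw [← Real.rpow_add hpos, ← Real.rpow_mul_natCast hpos.le]
    congr 1
    push_cast
    ring
  calc damp a t ^ 2 = t ^ 2 * ((1 + t ^ 2) ^ (-a)) ^ 2 := by rw [damp, mul_pow]
    _ ≤ ((1 - 2 * a)⁻¹ * (1 + (1 - 2 * a) * t ^ 2)) * ((1 + t ^ 2) ^ (-a)) ^ 2 := by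
        gcongr
        rw [mul_add, inv_mul_cancel_left₀ h2.ne']
        have : 0 < (1 - 2 * a)⁻¹ := by positivity
        linarith
    _ = _ := by
        rw [deriv_damp, ← hexp]
        ring

/-- The growth condition `|t| ≤ c (1 + r)^m` with `m < 1` is absorbed by the decay
`log (2 + r) / (1 + r)` once the power of `1 + t²` is slightly larger than `1 / 2`. -/
lemma exists_rpow_mul_log_div_le {m c : ℝ} (hm0 : 0 ≤ m) (hm1 : m < 1) :
    ∃ M : ℝ, 0 ≤ M ∧ ∀ r t : ℝ, 0 ≤ r → |t| ≤ c * (1 + r) ^ m →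
      (1 + t ^ 2) ^ (1 - (1 + m) / 4) * (Real.log (2 + r) / (1 + r)) ≤ M := by
  have hε : 0 < (1 - m) / 2 := by linarith
  refine ⟨(1 + c ^ 2) ^ (1 - (1 + m) / 4) * (2 ^ ((1 - m) / 2) / ((1 - m) / 2)), by positivity,
    fun r t hr ht => ?_⟩
  have hr1 : 1 ≤ 1 + r := by linarith
  have hr0 : 0 < 1 + r := by linarith
  have ht2 : 1 + t ^ 2 ≤ (1 + c ^ 2) * (1 + r) ^ (2 * m) := by
    have h1 : (1 + r) ^ (2 * m) = ((1 + r) ^ m) ^ 2 := by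
      rw [← Real.rpow_natCast, ← Real.rpow_mul hr0.le, mul_comm]
      norm_num
    have h2 : t ^ 2 ≤ (c * (1 + r) ^ m) ^ 2 := sq_le_sq' (neg_le_of_abs_le ht) (le_of_abs_le ht)
    have h3 : 1 ≤ (1 + r) ^ m := Real.one_le_rpow hr1 hm0
    rw [h1]
    nlinarith
  have hlog : Real.log (2 + r) ≤ 2 ^ ((1 - m) / 2) / ((1 - m) / 2) * (1 + r) ^ ((1 - m) / 2) := by
    calc Real.log (2 + r) ≤ (2 + r) ^ ((1 - m) / 2) / ((1 - m) / 2) :=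
          Real.log_le_rpow_div (by linarith) hε
      _ ≤ (2 * (1 + r)) ^ ((1 - m) / 2) / ((1 - m) / 2) := by
          gcongr
          linarith
      _ = _ := by
          rw [Real.mul_rpow zero_le_two hr0.le]
          ring
  have hpow : (1 + t ^ 2) ^ (1 - (1 + m) / 4)
      ≤ (1 + c ^ 2) ^ (1 - (1 + m) / 4) * (1 + r) ^ (2 * m * (1 - (1 + m) / 4)) := by
    rw [Real.rpow_mul hr0.le, ← Real.mul_rpow (by positivity) (by positivity)]
    exact Real.rpow_le_rpow (by positivity) ht2 (by linarith)
  have hone : (1 + r) ^ (2 * m * (1 - (1 + m) / 4)) * (1 + r) ^ ((1 - m) / 2) ≤ 1 + r := by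
    rw [← Real.rpow_add hr0]
    calc _ ≤ (1 + r) ^ (1 : ℝ) := Real.rpow_le_rpow_of_exponent_le hr1 (by nlinarith)
      _ = _ := Real.rpow_one _
  rw [← mul_div_assoc, div_le_iff₀ hr0]
  have hlog0 : 0 ≤ Real.log (2 + r) := Real.log_nonneg (by linarith)
  calc _ ≤ ((1 + c ^ 2) ^ (1 - (1 + m) / 4) * (1 + r) ^ (2 * m * (1 - (1 + m) / 4))) *
        (2 ^ ((1 - m) / 2) / ((1 - m) / 2) * (1 + r) ^ ((1 - m) / 2)) := by gcongr
    _ = (1 + c ^ 2) ^ (1 - (1 + m) / 4) * (2 ^ ((1 - m) / 2) / ((1 - m) / 2)) *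
        ((1 + r) ^ (2 * m * (1 - (1 + m) / 4)) * (1 + r) ^ ((1 - m) / 2)) := by ring
    _ ≤ _ := by gcongr

lemma hess_eq (f : E2 → ℝ) (p q : E2) : Hess f p q = fderiv ℝ (fderiv ℝ f) p q q := by
  simp [Hess, iteratedFDeriv_two_apply]

lemma fderiv_fderiv_comm {u : E2 → ℝ} (hu : ContDiff ℝ 2 u) (x v w : E2) :
    fderiv ℝ (fderiv ℝ u) x v w = fderiv ℝ (fderiv ℝ u) x w v :=
  (hu.contDiffAt.isSymmSndFDerivAt (by simp)).eq v w

lemma contDiff_gradient {u : E2 → ℝ} (hu : ContDiff ℝ 2 u) : ContDiff ℝ 1 (gradient u) :=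
  (InnerProductSpace.toDual ℝ E2).symm.contDiff.comp (hu.fderiv_right (m := 1) (by norm_num))

lemma eq_sum_ee (v : E2) : v = ∑ i, v i • ee i := by
  ext j
  fin_cases j <;> simp [ee]

lemma inner_ee (v : E2) (i : Fin 2) : inner ℝ v (ee i) = v i := by
  simp [ee, EuclideanSpace.inner_single_right]

lemma fderiv_ee (φ : E2 → ℝ) (x : E2) (i : Fin 2) : fderiv ℝ φ x (ee i) = gradient φ x i := by
  rw [← inner_gradient_left, inner_ee]

lemma fderiv_gradient_apply {u : E2 → ℝ} (hu : ContDiff ℝ 2 u) (x v : E2) (i : Fin 2) :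
    fderiv ℝ (gradient u) x v i = fderiv ℝ (fderiv ℝ u) x v (ee i) := by
  have h : HasFDerivAt (gradient u) _ x :=
    (InnerProductSpace.toDual ℝ E2).symm.toContinuousLinearEquiv.hasFDerivAt.comp x
      ((hu.fderiv_right (m := 1) (by norm_num)).differentiable one_ne_zero x).hasFDerivAt
  rw [h.fderiv, ← inner_ee]
  exact InnerProductSpace.toDual_symm_apply

/-- The gradient of a directional derivative is the directional derivative of the gradient. -/
lemma gradient_fderiv_apply {u : E2 → ℝ} (hu : ContDiff ℝ 2 u) (x v : E2) :
    gradient (fun y => fderiv ℝ u y v) x = fderiv ℝ (gradient u) x v := by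
  have hd := ((hu.fderiv_right (m := 1) (by norm_num)).differentiable one_ne_zero x).hasFDerivAt
  ext i
  rw [fderiv_gradient_apply hu, ← fderiv_ee, (hd.clm_apply (hasFDerivAt_const v x)).fderiv,
    fderiv_fderiv_comm hu]
  simp

/-- Chain rule for the components of `Df(∇u)`. -/
lemma fderiv_fderiv_gradient {f u : E2 → ℝ} (hf : ContDiff ℝ 2 f) (hu : ContDiff ℝ 2 u)
    (x v e : E2) :
    fderiv ℝ (fun y => fderiv ℝ f (gradient u y) e) x v
      = fderiv ℝ (fderiv ℝ f) (gradient u x) (fderiv ℝ (gradient u) x v) e := by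
  have h1 := ((hf.fderiv_right (m := 1) (by norm_num)).differentiable one_ne_zero
    (gradient u x)).hasFDerivAt
  have h2 := ((contDiff_gradient hu).differentiable one_ne_zero x).hasFDerivAt
  have h3 : fderiv ℝ (fun y => fderiv ℝ f (gradient u y) e) x = _ :=
    ((h1.comp x h2).clm_apply (hasFDerivAt_const e x)).fderiv
  rw [h3]
  simp

/-- Directional derivatives of solutions solve the linearized equation weakly. -/
lemma integral_linearized_eq_zero {f u : E2 → ℝ} (hf : ContDiff ℝ 2 f) (hu : ContDiff ℝ 2 u)
    (heq : solves f u) (v : E2) {φ : E2 → ℝ} (hφ : ContDiff ℝ 1 φ) (hc : HasCompactSupport φ) :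
    ∫ x, fderiv ℝ (fderiv ℝ f) (gradient u x) (gradient (fun y => fderiv ℝ u y v) x)
      (gradient φ x) = 0 := by
  have hσ (i : Fin 2) : ContDiff ℝ 1 fun y => fderiv ℝ f (gradient u y) (ee i) :=
    ((hf.fderiv_right (m := 1) (by norm_num)).comp (contDiff_gradient hu)).clm_apply contDiff_const
  rw [← integral_sum_fderiv_mul_fderiv_eq_zero hσ heq hφ hc v]
  refine integral_congr_ae (Filter.Eventually.of_forall fun x => ?_)
  simp only [fderiv_fderiv_gradient hf hu, gradient_fderiv_apply hu, fderiv_ee φ]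
  conv_lhs => rw [eq_sum_ee (gradient φ x)]
  simp only [map_sum, map_smul, smul_eq_mul]
  exact Finset.sum_congr rfl fun i _ => mul_comm _ _

/-- If the Hessian of a solution annihilates a nonzero vector, then it vanishes. -/
lemma fderiv_fderiv_eq_zero_of_apply_eq_zero {f u : E2 → ℝ} (hf : ContDiff ℝ 2 f)
    (hpos : ∀ p q : E2, q ≠ 0 → 0 < Hess f p q) (hu : ContDiff ℝ 2 u) (heq : solves f u)
    {E : E2} (hE : E ≠ 0) {x : E2} (hx : fderiv ℝ (gradient u) x E = 0) :
    fderiv ℝ (fderiv ℝ u) x = 0 := by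
  set B := fderiv ℝ (fderiv ℝ f) (gradient u x) with hB
  set H := fderiv ℝ (fderiv ℝ u) x with hH
  have hHs : H (ee 1) (ee 0) = H (ee 0) (ee 1) := fderiv_fderiv_comm hu x _ _
  have hBs : B (ee 1) (ee 0) = B (ee 0) (ee 1) := fderiv_fderiv_comm hf _ _ _
  have hker (i : Fin 2) : E 0 * H (ee 0) (ee i) + E 1 * H (ee 1) (ee i) = 0 := by
    have h := fderiv_gradient_apply hu x E i
    rw [hx, ← hH, eq_sum_ee E] at h
    simpa [Fin.sum_univ_two] using h.symm
  have hgrad (i : Fin 2) : fderiv ℝ (gradient u) x (ee i)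
      = H (ee i) (ee 0) • ee 0 + H (ee i) (ee 1) • ee 1 := by
    rw [eq_sum_ee (fderiv ℝ (gradient u) x (ee i)), Fin.sum_univ_two,
      fderiv_gradient_apply hu, fderiv_gradient_apply hu]
  have hpde := heq x
  simp only [fderiv_fderiv_gradient hf hu, ← hB, Fin.sum_univ_two, hgrad, map_add, map_smul,
    add_apply, smul_apply, smul_eq_mul, hHs, hBs] at hpde
  have hN : E 0 ^ 2 + E 1 ^ 2 ≠ 0 := by
    intro h
    refine hE ?_
    ext i
    fin_cases i <;> simp <;> nlinarith [sq_nonneg (E 0), sq_nonneg (E 1)]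
  have hq : 0 < B ((-E 1) • ee 0 + E 0 • ee 1) ((-E 1) • ee 0 + E 0 • ee 1) := by
    rw [hB, ← hess_eq]
    refine hpos _ _ fun h => hN ?_
    have h0 : -E 1 = 0 := by simpa [ee] using congrArg (fun v : E2 => v 0) h
    have h1 : E 0 = 0 := by simpa [ee] using congrArg (fun v : E2 => v 1) h
    rw [h1, neg_eq_zero.1 h0]
    simp
  simp only [map_add, map_smul, add_apply, smul_apply,
    smul_eq_mul, hBs] at hq
  have hk0 := hker 0
  have hk1 := hker 1
  rw [hHs] at hk0
  have htr : H (ee 0) (ee 0) + H (ee 1) (ee 1) = 0 := by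
    refine (mul_eq_zero.1 (?_ : _ * (H (ee 0) (ee 0) + H (ee 1) (ee 1)) = 0)).resolve_left hq.ne'
    linear_combination (E 0 ^ 2 + E 1 ^ 2) * hpde - B (ee 0) (ee 0) * (E 0 * hk0 - E 1 * hk1)
      - 2 * B (ee 0) (ee 1) * (E 0 * hk1 + E 1 * hk0) - B (ee 1) (ee 1) * (E 1 * hk1 - E 0 * hk0)
  have hzero (i j : Fin 2) : H (ee i) (ee j) = 0 := by
    refine (mul_eq_zero.1 (?_ : (E 0 ^ 2 + E 1 ^ 2) * _ = 0)).resolve_left hN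
    fin_cases i <;> fin_cases j <;> simp only [Fin.zero_eta, Fin.mk_one, hHs]
    · linear_combination (E 1) ^ 2 * htr + E 0 * hk0 - E 1 * hk1
    · linear_combination - E 0 * E 1 * htr + E 0 * hk1 + E 1 * hk0
    · linear_combination - E 0 * E 1 * htr + E 0 * hk1 + E 1 * hk0
    · linear_combination (E 0) ^ 2 * htr - E 0 * hk0 + E 1 * hk1
  ext v w
  rw [eq_sum_ee v, eq_sum_ee w]
  simp [Fin.sum_univ_two, hzero]

/-- A function with vanishing second derivative is affine. -/
lemma exists_affine_of_fderiv_fderiv_eq_zero {u : E2 → ℝ} (hu : ContDiff ℝ 2 u)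
    (h : ∀ x, fderiv ℝ (fderiv ℝ u) x = 0) :
    ∃ a b c : ℝ, ∀ x : E2, u x = a * x 0 + b * x 1 + c := by
  have hd : Differentiable ℝ (fderiv ℝ u) :=
    (hu.fderiv_right (m := 1) (by norm_num)).differentiable one_ne_zero
  have hu1 : Differentiable ℝ u := hu.differentiable two_ne_zero
  set T := fderiv ℝ u 0 with hT
  have hconst (x : E2) : fderiv ℝ u x = T := is_const_of_fderiv_eq_zero hd h x 0
  have hdiff (x : E2) : fderiv ℝ (fun y => u y - T y) x = 0 := by
    rw [fderiv_fun_sub (hu1 x) T.differentiableAt, T.fderiv, hconst, sub_self]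
  have hval (x : E2) : u x - T x = u 0 - T 0 :=
    is_const_of_fderiv_eq_zero (hu1.sub T.differentiable) hdiff x 0
  refine ⟨T (ee 0), T (ee 1), u 0, fun x => ?_⟩
  have hTx : T x = T (ee 0) * x 0 + T (ee 1) * x 1 := by
    conv_lhs => rw [eq_sum_ee x]
    simp [Fin.sum_univ_two, mul_comm]
  have := hval x
  rw [map_zero] at this
  linarith

theorem statement14 (f u : E2 → ℝ)
    (hf : ContDiff ℝ 2 f)
    (hpos : ∀ p q : E2, q ≠ 0 → 0 < Hess f p q)
    (lam : ℝ) (hlam : 0 < lam)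
    (hgrow : ∀ p q : E2, Hess f p q ≤ lam * (Real.log (2 + ‖p‖) / (1 + ‖p‖)) * ‖q‖ ^ 2)
    (hu : ContDiff ℝ 2 u) (heq : solves f u)
    (E₁ E₂ : E2) (hli : LinearIndependent ℝ ![E₁, E₂])
    (m K : ℝ) (hm0 : 0 ≤ m) (hm1 : m < 1) (hK : 0 < K)
    (hbd : ∀ x : E2, |fderiv ℝ u x E₁| ≤ K * (|fderiv ℝ u x E₂| ^ m + 1)) :
    ∃ a b c : ℝ, ∀ x : E2, u x = a * x 0 + b * x 1 + c := by
  have hE₁ : E₁ ≠ 0 := by simpa using hli.ne_zero 0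
  have hHess (p q : E2) : 0 ≤ fderiv ℝ (fderiv ℝ f) p q q := by
    rcases eq_or_ne q 0 with rfl | hq
    · simp
    · rw [← hess_eq]
      exact (hpos p q hq).le
  have hw : ContDiff ℝ 1 fun x => fderiv ℝ u x E₁ :=
    (hu.fderiv_right (m := 1) (by norm_num)).clm_apply contDiff_const
  have hwbd (x : E2) : |fderiv ℝ u x E₁| ≤ K * (‖E₂‖ ^ m + 1) * (1 + ‖gradient u x‖) ^ m := by
    have h1 : |fderiv ℝ u x E₂| ≤ ‖E₂‖ * (1 + ‖gradient u x‖) := by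
      rw [← inner_gradient_left]
      nlinarith [abs_real_inner_le_norm (gradient u x) E₂, norm_nonneg E₂]
    have h2 : |fderiv ℝ u x E₂| ^ m ≤ ‖E₂‖ ^ m * (1 + ‖gradient u x‖) ^ m := by
      rw [← Real.mul_rpow (norm_nonneg _) (by positivity)]
      exact Real.rpow_le_rpow (abs_nonneg _) h1 hm0
    have h3 : 1 ≤ (1 + ‖gradient u x‖) ^ m :=
      Real.one_le_rpow (by linarith [norm_nonneg (gradient u x)]) hm0
    calc _ ≤ K * (|fderiv ℝ u x E₂| ^ m + 1) := hbd x
      _ ≤ K * (‖E₂‖ ^ m * (1 + ‖gradient u x‖) ^ m + (1 + ‖gradient u x‖) ^ m) := by gcongr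
      _ = _ := by ring
  obtain ⟨M, hM0, hM⟩ := exists_rpow_mul_log_div_le (c := K * (‖E₂‖ ^ m + 1)) hm0 hm1
  set a := (1 + m) / 4 with ha
  have ha2 : a < 1 / 2 := by rw [ha]; linarith
  have ha3 : 0 < 1 - 2 * a := by linarith
  have henergy := energy_eq_zero_of_weak_solution
    (A := fun x => fderiv ℝ (fderiv ℝ f) (gradient u x))
    (((hf.fderiv_right (m := 1) (by norm_num)).continuous_fderiv one_ne_zero).comp
      (contDiff_gradient hu).continuous)
    (fun x => fderiv_fderiv_comm hf _) (fun x => hHess _) hw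
    (fun φ hφ hc => integral_linearized_eq_zero hf hu heq E₁ hφ hc)
    (contDiff_damp a) (deriv_damp_pos ha2) (M := lam * ((1 - 2 * a)⁻¹ * M)) (by positivity)
    (fun x q => by
      have hg := (deriv_damp_pos ha2 (fderiv ℝ u x E₁)).le
      calc _ ≤ ((1 - 2 * a)⁻¹ * (1 + fderiv ℝ u x E₁ ^ 2) ^ (1 - a) *
            deriv (damp a) (fderiv ℝ u x E₁)) *
            (lam * (Real.log (2 + ‖gradient u x‖) / (1 + ‖gradient u x‖)) * ‖q‖ ^ 2) := by
            refine mul_le_mul (damp_sq_le ha2 _) ?_ (hHess _ _) (by positivity)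
            rw [← hess_eq]
            exact hgrow _ _
        _ = lam * ((1 - 2 * a)⁻¹ * ((1 + fderiv ℝ u x E₁ ^ 2) ^ (1 - a) *
            (Real.log (2 + ‖gradient u x‖) / (1 + ‖gradient u x‖)))) *
            deriv (damp a) (fderiv ℝ u x E₁) * ‖q‖ ^ 2 := by ring
        _ ≤ _ := by
            gcongr
            exact hM _ _ (norm_nonneg _) (hwbd x))
  refine exists_affine_of_fderiv_fderiv_eq_zero hu fun x =>
    fderiv_fderiv_eq_zero_of_apply_eq_zero hf hpos hu heq hE₁ ?_
  rw [← gradient_fderiv_apply hu]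
  by_contra hne
  have := hpos (gradient u x) _ hne
  rw [hess_eq] at this
  exact this.ne' (henergy x)
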